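/- Let $d, T, K \geq 1$ and let $\lambda, \phi', \alpha \in \mathbb{R}$ with $1 \leq \phi' \leq \lambda$ and $\alpha \geq 0$. Let $\theta^* \in \mathbb{R}^d$, and let $w_{1,0},\dots,w_{K,0} \in [0,1]$. For each round $t \in \{1,\dots,T\}$ let $\mathcal{D}_t \subseteq \{x \in \mathbb{R}^d : \|x\|_2 \leq 1\}$ be a finite set with $|\mathcal{D}_t| \geq K$, let $\theta_{t-1} \in \mathbb{R}^d$ be any vector, and let $w_{t,1},\dots,w_{t,K} \in [0,1]$ be any weights satisfying $w_{k,0} \leq w_{t,k}$ for all $k$ and $\sum_{k=1}^{K} w_{t,k}^2 \leq \phi'$. Define $A_0 = \lambda I_d$, and in each round let $a_{1,t},\dots,a_{K,t} \in \mathcal{D}_t$ be chosen greedily by the index $x \mapsto \langle \theta_{t-1}, x\rangle + \alpha\sqrt{x^{\top} A_{t-1}^{-1} x}$ (each $a_{k,t}$ maximizing the index over $\mathcal{D}_t \setminus \{a_{1,t},\dots,a_{k-1,t}\}$), let $a^*_{1,t},\dots,a^*_{K,t} \in \mathcal{D}_t$ be distinct elements with the $K$ largest values of $\langle\theta^*,\cdot\rangle$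 ordered decreasingly, and set $A_t = A_{t-1} + \sum_{k=1}^{K} w_{t,k}^2\, a_{k,t} a_{k,t}^{\top}$. Assume the confidence event holds: $|\langle x, \theta^* - \theta_{t-1}\rangle| \leq \alpha\sqrt{x^{\top} A_{t-1}^{-1} x}$ for every $t \leq T$ and every $x \in \mathcal{D}_t$. Then $\sum_{t=1}^{T}\sum_{k=1}^{K} w_{k,0}\bigl(\langle\theta^*, a^*_{k,t}\rangle - \langle\theta^*, a_{k,t}\rangle\bigr) \leq 2\alpha\sqrt{2 T K d \ln\bigl(1 + \tfrac{\phi' T}{\lambda d}\bigr)}$. -/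

import Mathlib

/-! The top-`K` argument (`gap_le_two_mul_width`): among the `k` best arms at least one,
`astar j` with `j ≤ k`, is still available when the `k`-th arm is chosen, so greediness and validity
of the confidence intervals give `⟨θ*, a*ₖ⟩ ≤ ⟨θ*, a*ⱼ⟩ ≤ index(a*ⱼ) ≤ index(aₖ)`, and the gap in slot
`k` is at most twice the confidence width of `aₖ`.

The elliptical potential: put `u_t = ∑ₖ w_{t,k}² aₖᵀ A_{t-1}⁻¹ aₖ = tr (A_{t-1}⁻¹ B_t)`, where
`B_t = A_t - A_{t-1}`. Since `A_{t-1} ≥ λ I`, `u_t ≤ φ'/λ ≤ 1`, hence `u_t ≤ 2 log (1 + u_t)`. All `K`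
rank-one updates of a round are handled at once by `det (A + B) ≥ det A * (1 + tr (A⁻¹ B))`
(`det_mul_one_add_trace_le`), so `∑ u_t ≤ 2 log (det A_T / λᵈ)`, and the determinant is bounded by the
trace through the AM-GM inequality (`log_det_le`). Cauchy-Schwarz over the `T K` pairs `(t, k)`
combines the two parts. -/

open Finset Matrix

/-- For `M` positive semidefinite, `det (1 + M) = ∏ (1 + μᵢ) ≥ 1 + ∑ μᵢ`. -/
lemma one_add_trace_le_det {d : ℕ} {M : Matrix (Fin d) (Fin d) ℝ} (hM : M.PosSemidef) :
    1 + M.trace ≤ (1 + M).det := by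
  have hH : (1 + M).IsHermitian := isHermitian_one.add hM.1
  have hdet := hH.det_eq_prod_eigenvalues
  have htr := hH.trace_eq_sum_eigenvalues
  have hge : ∀ i, 1 ≤ hH.eigenvalues i := by
    intro i
    set v := (hH.eigenvectorBasis i).ofLp with hv
    have h1 : (1 + M) *ᵥ v = hH.eigenvalues i • v := hH.mulVec_eigenvectorBasis i
    have h2 : 0 ≤ v ⬝ᵥ (M *ᵥ v) := by simpa using hM.dotProduct_mulVec_nonneg v
    have h3 : v ⬝ᵥ v = 1 := by
      have := hH.eigenvectorBasis.orthonormal.1 i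
      have h4 : inner ℝ (hH.eigenvectorBasis i) (hH.eigenvectorBasis i) = (1 : ℝ) := by
        rw [real_inner_self_eq_norm_sq, this]; norm_num
      rw [EuclideanSpace.inner_eq_star_dotProduct, star_trivial] at h4
      exact h4
    have h5 : v ⬝ᵥ ((1 + M) *ᵥ v) = hH.eigenvalues i := by
      rw [h1, dotProduct_smul, h3]; simp
    rw [add_mulVec, one_mulVec, dotProduct_add, h3] at h5
    linarith
  have hprod : ∀ s : Finset (Fin d),
      1 + ∑ i ∈ s, (hH.eigenvalues i - 1) ≤ ∏ i ∈ s, hH.eigenvalues i ∧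
        1 ≤ ∏ i ∈ s, hH.eigenvalues i := by
    intro s
    induction s using Finset.induction_on with
    | empty => simp
    | insert i s hi ih =>
      rw [Finset.sum_insert hi, Finset.prod_insert hi]
      have := hge i
      constructor <;> nlinarith [ih.1, ih.2]
  have h := (hprod Finset.univ).1
  rw [Finset.sum_sub_distrib] at h
  rw [trace_add, trace_one] at htr
  simp only [RCLike.ofReal_real_eq_id, id] at hdet htr
  rw [hdet]
  simp at h htr
  linarith

open scoped MatrixOrder Matrix.Norms.L2Operator in
/-- Writing `A = Cᴴ C` reduces the claim to `one_add_trace_le_det` for `C⁻ᴴ B C⁻¹`. -/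
lemma det_mul_one_add_trace_le {d : ℕ} {A B : Matrix (Fin d) (Fin d) ℝ} (hA : A.PosDef)
    (hB : B.PosSemidef) : A.det * (1 + (A⁻¹ * B).trace) ≤ (A + B).det := by
  obtain ⟨C, hC⟩ : ∃ C : Matrix (Fin d) (Fin d) ℝ, A = Cᴴ * C := by
    obtain ⟨C, hC⟩ := CStarAlgebra.nonneg_iff_eq_star_mul_self.mp hA.posSemidef.nonneg
    exact ⟨C, hC⟩
  have hdetA : 0 < A.det := hA.det_pos
  have hCdet : IsUnit C.det := by
    rw [isUnit_iff_ne_zero]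
    intro h0
    rw [hC, det_mul, h0] at hdetA
    simp at hdetA
  have hCHdet : IsUnit (Cᴴ).det := by
    rw [det_conjTranspose]; exact hCdet.star
  have hM : ((C⁻¹)ᴴ * B * C⁻¹).PosSemidef := hB.conjTranspose_mul_mul_same _
  have hfac : A + B = Cᴴ * (1 + (C⁻¹)ᴴ * B * C⁻¹) * C := by
    rw [mul_add, add_mul, mul_one, ← hC, conjTranspose_nonsing_inv]
    congr 1
    have e : Cᴴ * (Cᴴ⁻¹ * B * C⁻¹) * C = (Cᴴ * Cᴴ⁻¹) * B * (C⁻¹ * C) := by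
      simp only [Matrix.mul_assoc]
    rw [e, mul_nonsing_inv _ hCHdet, nonsing_inv_mul _ hCdet, one_mul, mul_one]
  have htr : ((C⁻¹)ᴴ * B * C⁻¹).trace = (A⁻¹ * B).trace := by
    rw [trace_mul_comm, hC, Matrix.mul_inv_rev, conjTranspose_nonsing_inv, ← Matrix.mul_assoc]
  have hdet : (A + B).det = A.det * (1 + (C⁻¹)ᴴ * B * C⁻¹).det := by
    rw [hfac, det_mul, det_mul, hC, det_mul]; ring
  rw [hdet, ← htr]
  exact mul_le_mul_of_nonneg_left (one_add_trace_le_det hM) hdetA.le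

/-- AM-GM for the eigenvalues, obtained by summing `log (νᵢ / m) ≤ νᵢ / m - 1`; any `m` at least the
mean of the eigenvalues is allowed. -/
lemma log_det_le {d : ℕ} {A : Matrix (Fin d) (Fin d) ℝ} (hA : A.PosDef) {m : ℝ} (hm : 0 < m)
    (htr : A.trace ≤ d * m) : Real.log A.det ≤ d * Real.log m := by
  have hdet := hA.1.det_eq_prod_eigenvalues
  have htr' := hA.1.trace_eq_sum_eigenvalues
  simp only [RCLike.ofReal_real_eq_id, id] at hdet htr'
  have hpos := hA.eigenvalues_pos
  rw [hdet, Real.log_prod (fun i _ => (hpos i).ne')]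
  have h1 : ∀ i, Real.log (hA.1.eigenvalues i) ≤
      Real.log m + (hA.1.eigenvalues i / m - 1) := by
    intro i
    have := Real.log_le_sub_one_of_pos (div_pos (hpos i) hm)
    rw [Real.log_div (hpos i).ne' hm.ne'] at this
    linarith
  have h2 := Finset.sum_le_sum (s := Finset.univ) fun i _ => h1 i
  rw [Finset.sum_add_distrib, Finset.sum_sub_distrib, ← Finset.sum_div, ← htr'] at h2
  simp at h2
  have h3 : A.trace / m ≤ d := by rw [div_le_iff₀ hm]; exact htr
  linarith

/-- If `A ≥ λ I` then `xᵀ A⁻¹ x ≤ 1 / λ` on the unit ball: with `y = A⁻¹ x`,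
`(x·y)² ≤ y·y ≤ (y·A y) / λ = (x·y) / λ`. -/
lemma quad_inv_le {d : ℕ} {A : Matrix (Fin d) (Fin d) ℝ} (hA : A.PosDef) {lam : ℝ} (hl : 0 < lam)
    (hlow : ∀ y : Fin d → ℝ, lam * (y ⬝ᵥ y) ≤ y ⬝ᵥ (A *ᵥ y)) (x : Fin d → ℝ)
    (hx : x ⬝ᵥ x ≤ 1) : x ⬝ᵥ (A⁻¹ *ᵥ x) ≤ 1 / lam := by
  set y := A⁻¹ *ᵥ x with hy
  have hAy : A *ᵥ y = x := by
    rw [hy, mulVec_mulVec, mul_nonsing_inv _ (isUnit_iff_ne_zero.mpr hA.det_pos.ne'), one_mulVec]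
  have h1 := hlow y
  rw [hAy, dotProduct_comm y x] at h1
  have hcs : (x ⬝ᵥ y) ^ 2 ≤ (x ⬝ᵥ x) * (y ⬝ᵥ y) := by
    simpa [dotProduct, sq] using Finset.sum_mul_sq_le_sq_mul_sq Finset.univ x y
  have hyy : 0 ≤ y ⬝ᵥ y := by simpa using dotProduct_star_self_nonneg y
  rw [le_div_iff₀ hl]
  by_contra hcon
  push Not at hcon
  have hp : 0 < x ⬝ᵥ y := by
    by_contra h0
    push Not at h0
    nlinarith
  have h2 : (x ⬝ᵥ y) ^ 2 ≤ y ⬝ᵥ y := by nlinarith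
  nlinarith

lemma trace_mul_vecMulVec_self {d : ℕ} (M : Matrix (Fin d) (Fin d) ℝ) (x : Fin d → ℝ) :
    (M * vecMulVec x x).trace = x ⬝ᵥ (M *ᵥ x) := by
  rw [mul_vecMulVec, trace_vecMulVec, dotProduct_comm]

lemma le_two_mul_log_one_add {u : ℝ} (h0 : 0 ≤ u) (h1 : u ≤ 1) : u ≤ 2 * Real.log (1 + u) := by
  have h := Real.le_log_one_add_of_nonneg h0
  have h2 : u / 2 ≤ 2 * u / (u + 2) := by
    rw [div_le_div_iff₀ (by norm_num) (by linarith)]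
    nlinarith
  linarith

/-- The per-slot gap is at most twice the confidence width `s (a k)` of the chosen arm. By pigeonhole
some `astar j` with `j ≤ k` is not among the `k` arms chosen before slot `k`. -/
lemma gap_le_two_mul_width {d K : ℕ} {D : Finset (Fin d → ℝ)} {θstar θ : Fin d → ℝ}
    {s : (Fin d → ℝ) → ℝ} {a astar : Fin K → (Fin d → ℝ)} (haD : ∀ k, a k ∈ D)
    (haGreedy : ∀ k : Fin K, ∀ x ∈ D, (∀ j : Fin K, j < k → a j ≠ x) →
      θ ⬝ᵥ x + s x ≤ θ ⬝ᵥ (a k) + s (a k))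
    (hastarD : ∀ k, astar k ∈ D) (hastarInj : Function.Injective astar)
    (hastarSorted : ∀ j k : Fin K, j ≤ k → θstar ⬝ᵥ astar k ≤ θstar ⬝ᵥ astar j)
    (hconf : ∀ x ∈ D, |x ⬝ᵥ (θstar - θ)| ≤ s x) (k : Fin K) :
    θstar ⬝ᵥ astar k - θstar ⬝ᵥ a k ≤ 2 * s (a k) := by
  obtain ⟨j, hjk, hj⟩ : ∃ j ≤ k, ∀ i : Fin K, i < k → a i ≠ astar j := by
    by_contra hcon
    push Not at hcon
    have hsub : (Finset.Iic k).image astar ⊆ (Finset.Iio k).image a := by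
      intro x hx
      obtain ⟨j, hj, rfl⟩ := Finset.mem_image.mp hx
      obtain ⟨i, hi, h⟩ := hcon j (Finset.mem_Iic.mp hj)
      exact Finset.mem_image.mpr ⟨i, Finset.mem_Iio.mpr hi, h⟩
    have h1 := Finset.card_le_card hsub
    rw [Finset.card_image_of_injective _ hastarInj] at h1
    have h2 := h1.trans Finset.card_image_le
    simp at h2
  have h1 := haGreedy k _ (hastarD j) hj
  have h2 := abs_le.mp (hconf _ (hastarD j))
  have h3 := abs_le.mp (hconf _ (haD k))
  have h4 := hastarSorted j k hjk
  rw [dotProduct_sub, dotProduct_comm _ θstar, dotProduct_comm _ θ] at h2 h3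
  linarith [h2.2, h3.1]

/-- Deterministic core of Theorem 1 of the paper: on the confidence event, the
cumulative weighted regret of the UBM-LinUCB algorithm over `T` rounds is bounded by
`2α √(2TKd ln(1 + φ'T/(λd)))`.  For `t : Fin T`, `A ↑t` is the design matrix `A_{t-1}`
and `θ t` the ridge estimate `θ_{t-1}` available at the start of round `t`. -/
theorem stmt_15 (d T K : ℕ) (hd : 1 ≤ d) (hT : 1 ≤ T) (hK : 1 ≤ K)
    (lam phi α : ℝ) (hphi : 1 ≤ phi) (hlam : phi ≤ lam) (hα : 0 ≤ α)
    (θstar : Fin d → ℝ)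
    (w0 : Fin K → ℝ) (hw0 : ∀ k, w0 k ∈ Set.Icc (0 : ℝ) 1)
    -- the candidate arm sets, with unit-norm features and at least `K` arms
    (D : Fin T → Finset (Fin d → ℝ))
    (hDnorm : ∀ t, ∀ x ∈ D t, Real.sqrt (x ⬝ᵥ x) ≤ 1)
    (hDcard : ∀ t, K ≤ (D t).card)
    -- the ridge estimates
    (θ : Fin T → (Fin d → ℝ))
    -- the examination weights
    (w : Fin T → Fin K → ℝ) (hw : ∀ t k, w t k ∈ Set.Icc (0 : ℝ) 1)
    (hw0w : ∀ t k, w0 k ≤ w t k)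
    (hwsum : ∀ t, ∑ k : Fin K, (w t k) ^ 2 ≤ phi)
    -- the selected arms and the optimal arms
    (a astar : Fin T → Fin K → (Fin d → ℝ))
    -- the design matrices
    (A : ℕ → Matrix (Fin d) (Fin d) ℝ)
    (hA0 : A 0 = lam • (1 : Matrix (Fin d) (Fin d) ℝ))
    (hAt : ∀ t : Fin T,
      A (t + 1) = A t + ∑ k : Fin K, (w t k) ^ 2 • vecMulVec (a t k) (a t k))
    -- the arms are chosen greedily by the upper confidence index
    (haD : ∀ t k, a t k ∈ D t)
    (haInj : ∀ t, Function.Injective (a t))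
    (haGreedy : ∀ t : Fin T, ∀ k : Fin K, ∀ x ∈ D t, (∀ j : Fin K, j < k → a t j ≠ x) →
      θ t ⬝ᵥ x + α * Real.sqrt (x ⬝ᵥ ((A t)⁻¹ *ᵥ x)) ≤
        θ t ⬝ᵥ (a t k) + α * Real.sqrt (a t k ⬝ᵥ ((A t)⁻¹ *ᵥ a t k)))
    -- the optimal arms have the `K` largest true values, ordered decreasingly
    (hastarD : ∀ t k, astar t k ∈ D t)
    (hastarInj : ∀ t, Function.Injective (astar t))
    (hastarSorted : ∀ t : Fin T, ∀ j k : Fin K, j ≤ k →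
      θstar ⬝ᵥ astar t k ≤ θstar ⬝ᵥ astar t j)
    (hastarTop : ∀ t : Fin T, ∀ k : Fin K, ∀ x ∈ D t,
      (∀ j : Fin K, j ≤ k → astar t j ≠ x) → θstar ⬝ᵥ x ≤ θstar ⬝ᵥ astar t k)
    -- the confidence event
    (hconf : ∀ t : Fin T, ∀ x ∈ D t,
      |x ⬝ᵥ (θstar - θ t)| ≤ α * Real.sqrt (x ⬝ᵥ ((A t)⁻¹ *ᵥ x))) :
    ∑ t : Fin T, ∑ k : Fin K, w0 k * (θstar ⬝ᵥ astar t k - θstar ⬝ᵥ a t k) ≤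
      2 * α * Real.sqrt (2 * T * K * d * Real.log (1 + phi * T / (lam * d))) := by
  have hl : 0 < lam := by linarith
  have hd' : (0 : ℝ) < d := by exact_mod_cast hd
  have hunit : ∀ t k, a t k ⬝ᵥ a t k ≤ 1 := fun t k => by
    simpa using (Real.sqrt_le_left zero_le_one).mp (hDnorm t _ (haD t k))
  let B : Fin T → Matrix (Fin d) (Fin d) ℝ := fun t =>
    ∑ k : Fin K, (w t k) ^ 2 • vecMulVec (a t k) (a t k)
  have hB : ∀ t, (B t).PosSemidef := fun t =>
    posSemidef_sum _ fun k _ => by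
      have h := posSemidef_vecMulVec_self_star (a t k)
      rw [star_trivial] at h
      exact h.smul (sq_nonneg _)
  have hBtr : ∀ t, (B t).trace ≤ phi := fun t => by
    refine le_trans ?_ (hwsum t)
    simp only [B, trace_sum, trace_smul, trace_vecMulVec, smul_eq_mul]
    exact Finset.sum_le_sum fun k _ => mul_le_of_le_one_right (sq_nonneg _) (hunit t k)
  have hinv : ∀ n ≤ T, (A n).PosDef ∧
      (∀ y : Fin d → ℝ, lam * (y ⬝ᵥ y) ≤ y ⬝ᵥ (A n *ᵥ y)) ∧
      (A n).trace ≤ d * lam + n * phi := by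
    intro n
    induction n with
    | zero =>
      intro _
      rw [hA0]
      refine ⟨PosDef.one.smul hl, fun y => ?_, ?_⟩
      · rw [smul_mulVec, one_mulVec, dotProduct_smul, smul_eq_mul]
      · rw [trace_smul, trace_one]; simp [mul_comm]
    | succ n ih =>
      intro hn
      obtain ⟨h1, h2, h3⟩ := ih (by omega)
      have hs : A (n + 1) = A n + B ⟨n, hn⟩ := hAt ⟨n, hn⟩
      rw [hs]
      refine ⟨h1.add_posSemidef (hB _), fun y => ?_, ?_⟩
      · have h4 : 0 ≤ y ⬝ᵥ (B ⟨n, hn⟩ *ᵥ y) := by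
          simpa using (hB ⟨n, hn⟩).dotProduct_mulVec_nonneg y
        rw [add_mulVec, dotProduct_add]
        linarith [h2 y]
      · rw [trace_add]
        push_cast
        linarith [hBtr ⟨n, hn⟩]
  let q : Fin T → Fin K → ℝ := fun t k => a t k ⬝ᵥ ((A t)⁻¹ *ᵥ a t k)
  have hq0 : ∀ t k, 0 ≤ q t k := fun t k => by
    simpa using (hinv t t.2.le).1.inv.posSemidef.dotProduct_mulVec_nonneg (a t k)
  have hq1 : ∀ t k, q t k ≤ 1 / lam := fun t k =>
    quad_inv_le (hinv t t.2.le).1 hl (hinv t t.2.le).2.1 _ (hunit t k)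
  have htrq : ∀ t : Fin T, ((A t)⁻¹ * B t).trace = ∑ k, (w t k) ^ 2 * q t k := fun t => by
    simp only [B, Finset.mul_sum, trace_sum, mul_smul_comm, trace_smul, trace_mul_vecMulVec_self,
      smul_eq_mul, q]
  have hround : ∀ t : Fin T, ∑ k, (w t k) ^ 2 * q t k ≤
      2 * (Real.log (A (t + 1)).det - Real.log (A t).det) := by
    intro t
    have hu0 : 0 ≤ ∑ k, (w t k) ^ 2 * q t k :=
      Finset.sum_nonneg fun k _ => mul_nonneg (sq_nonneg _) (hq0 t k)
    have hu1 : ∑ k, (w t k) ^ 2 * q t k ≤ 1 := by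
      calc ∑ k, (w t k) ^ 2 * q t k ≤ ∑ k, (w t k) ^ 2 * (1 / lam) :=
            Finset.sum_le_sum fun k _ => mul_le_mul_of_nonneg_left (hq1 t k) (sq_nonneg _)
        _ = (∑ k, (w t k) ^ 2) / lam := by rw [← Finset.sum_mul, mul_one_div]
        _ ≤ 1 := by rw [div_le_one hl]; exact (hwsum t).trans hlam
    have hdet := det_mul_one_add_trace_le (hinv t t.2.le).1 (hB t)
    have hs : A (t + 1) = A t + B t := hAt t
    rw [← hs, htrq] at hdet
    have hp := (hinv t t.2.le).1.det_pos
    have hlog := Real.log_le_log (by positivity) hdet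
    rw [Real.log_mul hp.ne' (by positivity)] at hlog
    linarith [le_two_mul_log_one_add hu0 hu1]
  have hpot : ∑ t, ∑ k, (w t k) ^ 2 * q t k ≤
      2 * (d * Real.log (1 + phi * T / (lam * d))) := by
    have hm : 0 < lam + T * phi / d := by positivity
    have hfin := log_det_le (hinv T le_rfl).1 hm (by
      rw [mul_add, mul_div_cancel₀ _ hd'.ne']; exact (hinv T le_rfl).2.2)
    have hratio : lam + T * phi / d = lam * (1 + phi * T / (lam * d)) := by
      field_simp
    rw [hratio, Real.log_mul hl.ne' (by positivity)] at hfin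
    have hinit : Real.log (A 0).det = d * Real.log lam := by
      rw [hA0, det_smul, det_one]; simp
    calc ∑ t, ∑ k, (w t k) ^ 2 * q t k
        ≤ ∑ t : Fin T, 2 * (Real.log (A (t + 1)).det - Real.log (A t).det) :=
          Finset.sum_le_sum fun t _ => hround t
      _ = 2 * (Real.log (A T).det - Real.log (A 0).det) := by
          rw [← Finset.mul_sum,
            Fin.sum_univ_eq_sum_range (fun n => Real.log (A (n + 1)).det - Real.log (A n).det),
            Finset.sum_range_sub (fun n => Real.log (A n).det)]
      _ ≤ 2 * (d * Real.log (1 + phi * T / (lam * d))) := by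
          rw [hinit]; linarith
  have hslot : ∀ t k, w0 k * (θstar ⬝ᵥ astar t k - θstar ⬝ᵥ a t k) ≤
      2 * α * (w t k * Real.sqrt (q t k)) := by
    intro t k
    have hgap := gap_le_two_mul_width (s := fun x => α * Real.sqrt (x ⬝ᵥ ((A t)⁻¹ *ᵥ x)))
      (haD t) (haGreedy t) (hastarD t) (hastarInj t) (hastarSorted t) (hconf t) k
    calc w0 k * (θstar ⬝ᵥ astar t k - θstar ⬝ᵥ a t k)
        ≤ w0 k * (2 * (α * Real.sqrt (q t k))) := mul_le_mul_of_nonneg_left hgap (hw0 k).1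
      _ ≤ w t k * (2 * (α * Real.sqrt (q t k))) :=
          mul_le_mul_of_nonneg_right (hw0w t k) (by positivity)
      _ = 2 * α * (w t k * Real.sqrt (q t k)) := by ring
  have hcs : ∑ t, ∑ k, w t k * Real.sqrt (q t k) ≤
      Real.sqrt (2 * T * K * d * Real.log (1 + phi * T / (lam * d))) := by
    apply Real.le_sqrt_of_sq_le
    have h := sq_sum_le_card_mul_sum_sq (s := (Finset.univ : Finset (Fin T × Fin K)))
      (f := fun p => w p.1 p.2 * Real.sqrt (q p.1 p.2))
    simp only [mul_pow, Real.sq_sqrt (hq0 _ _), Fintype.sum_prod_type, Finset.card_univ,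
      Fintype.card_prod, Fintype.card_fin] at h
    push_cast at h
    calc _ ≤ _ := h
      _ ≤ (T * K : ℝ) * (2 * (d * Real.log (1 + phi * T / (lam * d)))) :=
          mul_le_mul_of_nonneg_left hpot (by positivity)
      _ = _ := by ring
  calc _ ≤ ∑ t, ∑ k, 2 * α * (w t k * Real.sqrt (q t k)) :=
        Finset.sum_le_sum fun t _ => Finset.sum_le_sum fun k _ => hslot t k
    _ = 2 * α * ∑ t, ∑ k, w t k * Real.sqrt (q t k) := by simp only [Finset.mul_sum]
    _ ≤ _ := mul_le_mul_of_nonneg_left hcs (by positivity)
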